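/- Let D be a Mori monoid (commutative cancellative monoid with ACC on divisorial ideals). Then every length set L(a), for a ∈ M, is finite and nonempty. -/

import Mathlib

/-- `(M : X) = {x ∈ q(M) : xX ⊆ M}`, computed inside the quotient group `G`. -/
def colonSet {G : Type*} [CommGroup G] (M : Submonoid G) (X : Set G) : Set G :=
  {x : G | ∀ y ∈ X, x * y ∈ M}

/-- The divisorial closure `X_v = (M : (M : X))`. -/
def vCl {G : Type*} [CommGroup G] (M : Submonoid G) (X : Set G) : Set G :=
  colonSet M (colonSet M X)

/-- `I` is a divisorial ideal of `M`: a subset of `M` with `I_v = I`. -/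
def IsDivisorial {G : Type*} [CommGroup G] (M : Submonoid G) (I : Set G) : Prop :=
  I ⊆ (M : Set G) ∧ vCl M I = I

/-- `M` satisfies the ascending chain condition on divisorial ideals (`M` is Mori). -/
def MoriACC {G : Type*} [CommGroup G] (M : Submonoid G) : Prop :=
  ∀ f : ℕ → Set G, (∀ n, IsDivisorial M (f n)) → (∀ n, f n ⊆ f (n + 1)) →
    ∃ N, ∀ n, N ≤ n → f n = f N

/-- `a` is an atom of `M`: a non-unit of `M` such that in any factorization `a = b * c`
with `b, c ∈ M`, one of `b, c` is a unit of `M`. -/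
def IsAtomOf {G : Type*} [CommGroup G] (M : Submonoid G) (a : G) : Prop :=
  a ∈ M ∧ a⁻¹ ∉ M ∧ ∀ b c : G, b ∈ M → c ∈ M → a = b * c → b⁻¹ ∈ M ∨ c⁻¹ ∈ M

/-- The length set of `a` in `M`, with the convention `L(a) = {0}` for units of `M`. -/
def LengthSetOf {G : Type*} [CommGroup G] (M : Submonoid G) (a : G) : Set ℕ :=
  {k | (a⁻¹ ∈ M ∧ k = 0) ∨
    ∃ l : List G, l.length = k ∧ (∀ x ∈ l, IsAtomOf M x) ∧ l.prod = a}

/-!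
Suppose `b` has products of arbitrarily many non-units as divisors. The divisorial ideals containing
`b` satisfy the descending chain condition, because `I ↦ b • (M : I)` is an injective
inclusion-reversing map into the divisorial ideals. So among those containing arbitrarily long
families of non-units whose product divides `b` there is a minimal `I`.
Grouping factors in pairs shows that `(I * I)_v` is again such an ideal, so `(I * I)_v = I` and
`T = (M : I)` is an overmonoid of `M`, again Mori. Only finitely many maximal divisorial ideals of
`T` contain `b`, and each non-unit factor of `b` in `I` lies in one of them. By the pigeonhole
principle one of them, `K`, contains arbitrarily long families of factors from `I`; minimality gives
`I ⊆ K`, and then `(T : K) ⊆ (T : I) = T` forces `1 ∈ K`.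
-/

section

open scoped Pointwise

variable {G : Type*} [CommGroup G] {M T : Submonoid G} {I J P X Y : Set G} {b x y : G}

theorem subset_colonSet_comm : X ⊆ colonSet M Y ↔ Y ⊆ colonSet M X :=
  ⟨fun h y hy x hx ↦ mul_comm x y ▸ h hx y hy, fun h x hx y hy ↦ mul_comm y x ▸ h hy x hx⟩

theorem colonSet_antitone (M : Submonoid G) : Antitone (colonSet M) :=
  fun _ _ h _ hx y hy ↦ hx y (h hy)

theorem subset_vCl (M : Submonoid G) (X : Set G) : X ⊆ vCl M X :=
  subset_colonSet_comm.1 subset_rfl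

theorem vCl_mono (M : Submonoid G) : Monotone (vCl M) :=
  (colonSet_antitone M).comp (colonSet_antitone M)

theorem vCl_colonSet (M : Submonoid G) (X : Set G) : vCl M (colonSet M X) = colonSet M X :=
  (colonSet_antitone M (subset_vCl M X)).antisymm (subset_vCl M _)

theorem one_mem_colonSet : 1 ∈ colonSet M X ↔ X ⊆ M := by
  simp only [colonSet, Set.mem_ofPred_eq, one_mul, Set.subset_def, SetLike.mem_coe]

theorem mul_mem_colonSet (hx : x ∈ M) (hy : y ∈ colonSet M X) : x * y ∈ colonSet M X :=
  fun z hz ↦ (mul_assoc x y z).symm ▸ M.mul_mem hx (hy z hz)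

theorem colonSet_union : colonSet M (X ∪ Y) = colonSet M X ∩ colonSet M Y :=
  Set.ext fun _ ↦ forall₂_or_left

theorem mem_colonSet_insert : x ∈ colonSet M (insert y X) ↔ x * y ∈ M ∧ x ∈ colonSet M X :=
  Set.forall_mem_insert

theorem mem_colonSet_mul : x ∈ colonSet M (X * Y) ↔ ∀ y ∈ X, x * y ∈ colonSet M Y := by
  constructor
  · intro h y hy z hz
    exact (mul_assoc x y z).symm ▸ h _ (Set.mul_mem_mul hy hz)
  · rintro h _ ⟨y, hy, z, hz, rfl⟩
    exact mul_assoc x y z ▸ h y hy z hz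

theorem colonSet_singleton (M : Submonoid G) (x : G) : colonSet M {x} = x⁻¹ • (M : Set G) := by
  ext y
  simp [colonSet, Set.mem_smul_set_iff_inv_smul_mem, mul_comm x y]

theorem colonSet_smul (M : Submonoid G) (x : G) (X : Set G) :
    colonSet M (x • X) = x⁻¹ • colonSet M X := by
  ext y
  rw [Set.mem_smul_set_iff_inv_smul_mem, inv_inv]
  simp only [colonSet, Set.mem_ofPred_eq, ← Set.image_smul, Set.forall_mem_image, smul_eq_mul,
    mul_comm x y, mul_assoc]

theorem vCl_smul (M : Submonoid G) (x : G) (X : Set G) : vCl M (x • X) = x • vCl M X := by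
  rw [vCl, colonSet_smul, colonSet_smul, inv_inv, vCl]

theorem isDivisorial_colonSet (h : colonSet M X ⊆ M) : IsDivisorial M (colonSet M X) :=
  ⟨h, vCl_colonSet M X⟩

theorem isDivisorial_coe (M : Submonoid G) : IsDivisorial M (M : Set G) := by
  have h : colonSet M {1} = (M : Set G) := by rw [colonSet_singleton, inv_one, one_smul]
  exact h ▸ isDivisorial_colonSet h.subset

theorem isDivisorial_vCl (h : X ⊆ M) : IsDivisorial M (vCl M X) :=
  isDivisorial_colonSet ((vCl_mono M h).trans (isDivisorial_coe M).2.subset)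

theorem isDivisorial_smul_coe (hx : x ∈ M) : IsDivisorial M (x • (M : Set G)) :=
  ⟨Set.smul_set_subset_iff.2 fun _ hy ↦ M.mul_mem hx hy,
    by rw [vCl_smul, (isDivisorial_coe M).2]⟩

theorem IsDivisorial.inter (hI : IsDivisorial M I) (hJ : vCl M J = J) :
    IsDivisorial M (I ∩ J) := by
  have h : colonSet M (colonSet M I ∪ colonSet M J) = I ∩ J := by
    rw [colonSet_union]
    exact congrArg₂ (· ∩ ·) hI.2 hJ
  exact h ▸ isDivisorial_colonSet (h.subset.trans (Set.inter_subset_left.trans hI.1))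

theorem IsDivisorial.mul_mem (hI : IsDivisorial M I) (hx : x ∈ M) (hy : y ∈ I) : x * y ∈ I := by
  rw [← hI.2] at hy ⊢
  exact mul_mem_colonSet hx hy

theorem MoriACC.fractional_chain_stabilizes (hacc : MoriACC M) {f : ℕ → Set G}
    (hf : ∀ n, vCl M (f n) = f n) (hb : ∀ n, b ∈ colonSet M (f n))
    (hmono : ∀ n, f n ⊆ f (n + 1)) : ∃ N, ∀ n, N ≤ n → f n = f N := by
  obtain ⟨N, hN⟩ := hacc (fun n ↦ b • f n)
    (fun n ↦ ⟨Set.smul_set_subset_iff.2 (hb n), by rw [vCl_smul, hf]⟩)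
    (fun n ↦ Set.smul_set_mono (hmono n))
  exact ⟨N, fun n hn ↦ smul_left_cancel b (hN n hn)⟩

theorem MoriACC.wellFoundedOn_gt_fractional (hacc : MoriACC M) (b : G) :
    {X | vCl M X = X ∧ b ∈ colonSet M X}.WellFoundedOn (· > ·) := by
  refine (wellFoundedGT_iff_monotone_chain_condition.2 fun f ↦ ?_).wf
  obtain ⟨N, hN⟩ := hacc.fractional_chain_stabilizes (fun n ↦ (f n).2.1) (fun n ↦ (f n).2.2)
    (fun n ↦ f.monotone n.le_succ)
  exact ⟨N, fun n hn ↦ Subtype.ext (hN n hn).symm⟩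

theorem MoriACC.wellFoundedOn_lt_of_mem (hacc : MoriACC M) (b : G) :
    {X | vCl M X = X ∧ b ∈ X}.WellFoundedOn (· < ·) := by
  have hmaps : Set.MapsTo (colonSet M) {X | vCl M X = X ∧ b ∈ X}
      {X | vCl M X = X ∧ b ∈ colonSet M X} :=
    fun X hX ↦ ⟨vCl_colonSet M X, subset_vCl M X hX.2⟩
  refine ((hacc.wellFoundedOn_gt_fractional b).mapsTo (colonSet M) hmaps).mono'
    fun X hX Y hY hXY ↦ ?_
  refine (colonSet_antitone M hXY.le).lt_of_ne fun h ↦ hXY.ne ?_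
  rw [← hX.1, ← hY.1, vCl, vCl, h]

/-- A maximal element among the divisorial ideals of `M` other than `M`; properness is encoded as
not containing `1`. -/
def IsMaximalDivisorial (M : Submonoid G) (P : Set G) : Prop :=
  Maximal (fun J ↦ IsDivisorial M J ∧ (1 : G) ∉ J) P

/-- The non-units of `M`, as elements of the ambient group. -/
def nonunitSet (M : Submonoid G) : Set G :=
  {x | x ∈ M ∧ x⁻¹ ∉ M}

theorem MoriACC.exists_isMaximalDivisorial_mem (hacc : MoriACC M) (hx : x ∈ nonunitSet M) :
    ∃ P, IsMaximalDivisorial M P ∧ x ∈ P := by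
  have hne : {J | (IsDivisorial M J ∧ (1 : G) ∉ J) ∧ x ∈ J}.Nonempty := by
    refine ⟨x • (M : Set G), ⟨isDivisorial_smul_coe hx.1, fun h ↦ hx.2 ?_⟩, 1, M.one_mem, mul_one x⟩
    simpa [Set.mem_smul_set_iff_inv_smul_mem] using h
  obtain ⟨P, ⟨hP, hxP⟩, hmax⟩ := ((hacc.wellFoundedOn_gt_fractional 1).subset
    fun J hJ ↦ ⟨hJ.1.1.2, one_mem_colonSet.2 hJ.1.1.1⟩).exists_maximal hne
  exact ⟨P, ⟨hP, fun J hJ hPJ ↦ hmax ⟨hJ, hPJ hxP⟩ hPJ⟩, hxP⟩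

theorem IsMaximalDivisorial.colonSet_insert_subset (hP : IsMaximalDivisorial M P) (hx : x ∈ M)
    (hxP : x ∉ P) : colonSet M (insert x P) ⊆ M := by
  by_contra h
  have hproper : (1 : G) ∉ vCl M (insert x P) := mt one_mem_colonSet.1 h
  have hsub : insert x P ⊆ vCl M (insert x P) := subset_vCl M _
  refine hxP (hP.2 ⟨isDivisorial_vCl (Set.insert_subset hx hP.1.1.1), hproper⟩ ?_ ?_)
  · exact (Set.subset_insert x P).trans hsub
  · exact hsub (Set.mem_insert x P)

theorem IsMaximalDivisorial.mul_notMem (hP : IsMaximalDivisorial M P) (hx : x ∈ M) (hy : y ∈ M)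
    (hxP : x ∉ P) (hyP : y ∉ P) : x * y ∉ P := by
  intro hxy
  have hcolon : colonSet M P ⊆ M := fun z hz ↦ by
    refine hP.colonSet_insert_subset hx hxP (mem_colonSet_insert.2 ⟨?_, hz⟩)
    refine hP.colonSet_insert_subset hy hyP (mem_colonSet_insert.2 ⟨?_, ?_⟩)
    · exact (mul_assoc z x y).symm ▸ hz _ hxy
    · exact mul_comm x z ▸ mul_mem_colonSet hx hz
  exact hP.1.2 (hP.1.1.2 ▸ one_mem_colonSet.2 hcolon)

theorem IsMaximalDivisorial.subset_or_subset_of_inter_subset (hP : IsMaximalDivisorial M P)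
    (hI : IsDivisorial M I) (hJ : IsDivisorial M J) (h : I ∩ J ⊆ P) : I ⊆ P ∨ J ⊆ P := by
  by_contra! hIJ
  obtain ⟨x, hx, hxP⟩ := Set.not_subset.1 hIJ.1
  obtain ⟨y, hy, hyP⟩ := Set.not_subset.1 hIJ.2
  have hxy : x * y ∈ I ∩ J := ⟨mul_comm y x ▸ hI.mul_mem (hJ.1 hy) hx, hJ.mul_mem (hI.1 hx) hy⟩
  exact hP.mul_notMem (hI.1 hx) (hJ.1 hy) hxP hyP (h hxy)

theorem MoriACC.finite_isMaximalDivisorial_mem (hacc : MoriACC M) (hb : b ∈ M) :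
    {P | IsMaximalDivisorial M P ∧ b ∈ P}.Finite := by
  have hempty : {P | IsMaximalDivisorial M P ∧ (M : Set G) ⊆ P} = ∅ :=
    Set.eq_empty_of_forall_notMem fun P hP ↦ hP.1.1.2 (hP.2 M.one_mem)
  obtain ⟨J, ⟨hJ, hbJ, hfin⟩, hmin⟩ := ((hacc.wellFoundedOn_lt_of_mem b).subset
    (s := {J | IsDivisorial M J ∧ b ∈ J ∧ {P | IsMaximalDivisorial M P ∧ J ⊆ P}.Finite})
    fun J hJ ↦ ⟨hJ.1.2, hJ.2.1⟩).exists_minimal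
    ⟨M, isDivisorial_coe M, hb, hempty ▸ Set.finite_empty⟩
  refine hfin.subset fun P ⟨hP, hbP⟩ ↦ ⟨hP, ?_⟩
  have hinter : {Q | IsMaximalDivisorial M Q ∧ J ∩ P ⊆ Q} ⊆
      insert P {Q | IsMaximalDivisorial M Q ∧ J ⊆ Q} := by
    rintro Q ⟨hQ, hJPQ⟩
    rcases hQ.subset_or_subset_of_inter_subset hJ hP.1.1 hJPQ with hJQ | hPQ
    · exact Or.inr ⟨hQ, hJQ⟩
    · exact Or.inl (hP.eq_of_ge hQ.1 hPQ)
  have hJP : J ⊆ J ∩ P := hmin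
    ⟨hJ.inter hP.1.1.2, ⟨hbJ, hbP⟩, (hfin.insert P).subset hinter⟩ Set.inter_subset_left
  exact hJP.trans Set.inter_subset_right

/-- The number of factors, counted with multiplicity, in a product of elements of `X` dividing `b`
in `M` is bounded. Divisibility of `b` by `p` in `M` is written as `b / p ∈ M`. -/
def BoundedDivisors (M : Submonoid G) (b : G) (X : Set G) : Prop :=
  ∃ n, ∀ s : Multiset G, (∀ x ∈ s, x ∈ X) → b / s.prod ∈ M → s.card ≤ n

theorem div_prod_mem_of_le {s t : Multiset G} (hs : ∀ x ∈ s, x ∈ M) (hts : t ≤ s)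
    (h : b / s.prod ∈ M) : b / t.prod ∈ M := by
  obtain ⟨r, rfl⟩ := Multiset.le_iff_exists_add.1 hts
  have hr : r.prod ∈ M :=
    M.multiset_prod_mem r fun x hx ↦ hs x (Multiset.mem_add.2 (Or.inr hx))
  rw [Multiset.prod_add, ← div_div] at h
  exact div_mul_cancel (b / t.prod) r.prod ▸ M.mul_mem h hr

theorem boundedDivisors_empty (M : Submonoid G) (b : G) : BoundedDivisors M b ∅ :=
  ⟨0, fun _ hs _ ↦ (Multiset.card_eq_zero.2 (Multiset.eq_zero_of_forall_notMem hs)).le⟩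

theorem BoundedDivisors.mono_of_dvd (h : BoundedDivisors M b Y) (hX : X ⊆ M)
    (hXY : ∀ x ∈ X, b / x ∈ M → x ∈ Y) : BoundedDivisors M b X := by
  obtain ⟨n, hn⟩ := h
  refine ⟨n, fun s hs hbs ↦ hn s (fun x hx ↦ hXY x (hs x hx) ?_) hbs⟩
  have hbx := div_prod_mem_of_le (fun x hx ↦ hX (hs x hx)) (Multiset.singleton_le.2 hx) hbs
  rwa [Multiset.prod_singleton] at hbx

theorem BoundedDivisors.mono (h : BoundedDivisors M b Y) (hXY : X ⊆ Y) : BoundedDivisors M b X :=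
  h.imp fun _ hn s hs ↦ hn s fun x hx ↦ hXY (hs x hx)

theorem exists_div_mem_of_not_boundedDivisors (hX : X ⊆ M) (h : ¬ BoundedDivisors M b X) :
    ∃ x ∈ X, b / x ∈ M := by
  contrapose! h
  exact (boundedDivisors_empty M b).mono_of_dvd hX h

theorem BoundedDivisors.union (hbX : BoundedDivisors M b X) (hbY : BoundedDivisors M b Y)
    (hX : X ⊆ M) (hY : Y ⊆ M) : BoundedDivisors M b (X ∪ Y) := by
  classical
  obtain ⟨m, hm⟩ := hbX
  obtain ⟨n, hn⟩ := hbY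
  refine ⟨m + n, fun s hs hbs ↦ ?_⟩
  have hsM : ∀ x ∈ s, x ∈ M := fun x hx ↦ Set.union_subset hX hY (hs x hx)
  have hcardX : (s.filter (· ∈ X)).card ≤ m :=
    hm _ (fun x hx ↦ (Multiset.mem_filter.1 hx).2)
      (div_prod_mem_of_le hsM (Multiset.filter_le _ s) hbs)
  have hcardY : (s.filter (· ∉ X)).card ≤ n := by
    refine hn _ (fun x hx ↦ ?_) (div_prod_mem_of_le hsM (Multiset.filter_le _ s) hbs)
    obtain ⟨hxs, hxX⟩ := Multiset.mem_filter.1 hx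
    exact (hs x hxs).resolve_left hxX
  rw [← Multiset.filter_add_not (· ∈ X) s, Multiset.card_add]
  exact add_le_add hcardX hcardY

theorem BoundedDivisors.biUnion {ι : Type*} {F : Set ι} (hF : F.Finite) {f : ι → Set G}
    (hf : ∀ i ∈ F, BoundedDivisors M b (f i)) (hfM : ∀ i ∈ F, f i ⊆ M) :
    BoundedDivisors M b (⋃ i ∈ F, f i) := by
  induction F, hF using Set.Finite.induction_on with
  | empty => simpa only [Set.biUnion_empty] using boundedDivisors_empty M b
  | insert _ _ ih =>
    rw [Set.forall_mem_insert] at hf hfM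
    rw [Set.biUnion_insert]
    exact hf.1.union (ih hf.2 hfM.2) hfM.1 (Set.iUnion₂_subset hfM.2)

theorem exists_multiset_of_pairs (hX : X ⊆ M) (l : List G) (hl : ∀ x ∈ l, x ∈ X) :
    ∃ t : Multiset G, (∀ x ∈ t, x ∈ X * X) ∧ l.length ≤ 2 * t.card + 1 ∧
      l.prod / t.prod ∈ M := by
  match l with
  | [] => exact ⟨0, by simp⟩
  | [x] => exact ⟨0, by simpa using hX (hl x (by simp))⟩
  | x :: y :: l =>
    simp only [List.forall_mem_cons] at hl
    obtain ⟨hx, hy, hl⟩ := hl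
    obtain ⟨t, ht, hcard, hprod⟩ := exists_multiset_of_pairs hX l hl
    refine ⟨(x * y) ::ₘ t, Multiset.forall_mem_cons.2 ⟨Set.mul_mem_mul hx hy, ht⟩, ?_, ?_⟩
    · simp only [List.length_cons, Multiset.card_cons]
      lia
    · rwa [Multiset.prod_cons, List.prod_cons, List.prod_cons, ← mul_assoc,
        mul_div_mul_left_eq_div]

theorem BoundedDivisors.of_mul_self (h : BoundedDivisors M b (X * X)) (hX : X ⊆ M) :
    BoundedDivisors M b X := by
  obtain ⟨n, hn⟩ := h
  refine ⟨2 * n + 1, fun s hs hbs ↦ ?_⟩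
  obtain ⟨t, ht, hcard, hst⟩ := exists_multiset_of_pairs hX s.toList
    fun x hx ↦ hs x (Multiset.mem_toList.1 hx)
  rw [Multiset.length_toList] at hcard
  rw [Multiset.prod_toList] at hst
  have hbt : b / t.prod ∈ M := div_mul_div_cancel b s.prod t.prod ▸ M.mul_mem hbs hst
  have := hn t ht hbt
  lia

theorem nonunitSet_subset (M : Submonoid G) : nonunitSet M ⊆ M :=
  fun _ hx ↦ hx.1

theorem mul_mem_nonunitSet (hx : x ∈ nonunitSet M) (hy : y ∈ M) : x * y ∈ nonunitSet M :=
  ⟨M.mul_mem hx.1 hy, fun h ↦ hx.2 (by simpa using M.mul_mem h hy)⟩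

theorem IsDivisorial.mem_of_div_mem (hI : IsDivisorial M I) (hx : x ∈ I) (h : b / x ∈ M) :
    b ∈ I :=
  div_mul_cancel b x ▸ hI.mul_mem h hx

theorem IsDivisorial.mem_of_not_boundedDivisors (hI : IsDivisorial M I)
    (h : ¬ BoundedDivisors M b (I ∩ nonunitSet M)) : b ∈ I := by
  obtain ⟨x, hx, hbx⟩ :=
    exists_div_mem_of_not_boundedDivisors (Set.inter_subset_left.trans hI.1) h
  exact hI.mem_of_div_mem hx.1 hbx

/-- A divisorial ideal minimal among those that contain arbitrarily long families of non-units whose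
product divides `b`. -/
def IsMinimalUnbounded (M : Submonoid G) (b : G) (I : Set G) : Prop :=
  Minimal (fun J ↦ IsDivisorial M J ∧ ¬ BoundedDivisors M b (J ∩ nonunitSet M)) I

theorem MoriACC.exists_isMinimalUnbounded (hacc : MoriACC M)
    (h : ¬ BoundedDivisors M b (nonunitSet M)) : ∃ I, IsMinimalUnbounded M b I :=
  ((hacc.wellFoundedOn_lt_of_mem b).subset fun _ hJ ↦
    ⟨hJ.1.2, hJ.1.mem_of_not_boundedDivisors hJ.2⟩).exists_minimal
    ⟨M, isDivisorial_coe M, by rwa [Set.inter_eq_right.2 (nonunitSet_subset M)]⟩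

theorem IsMinimalUnbounded.vCl_mul_self (hI : IsMinimalUnbounded M b I) : vCl M (I * I) = I := by
  obtain ⟨⟨hIdiv, hunb⟩, hmin⟩ := hI
  have hII : I * I ⊆ I := Set.mul_subset_iff.2 fun x hx y hy ↦ hIdiv.mul_mem (hIdiv.1 hx) hy
  have hvII : vCl M (I * I) ⊆ I := (vCl_mono M hII).trans hIdiv.2.subset
  have hpairs : (I ∩ nonunitSet M) * (I ∩ nonunitSet M) ⊆ vCl M (I * I) ∩ nonunitSet M :=
    Set.mul_subset_iff.2 fun x hx y hy ↦
      ⟨subset_vCl M _ (Set.mul_mem_mul hx.1 hy.1), mul_mem_nonunitSet hx.2 hy.2.1⟩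
  refine hvII.antisymm (hmin ⟨isDivisorial_vCl (hII.trans hIdiv.1), fun h ↦ hunb ?_⟩ hvII)
  exact (h.mono hpairs).of_mul_self (Set.inter_subset_left.trans hIdiv.1)

theorem colonSet_mul_self_of_vCl_mul_self (h : vCl M (I * I) = I) :
    colonSet M (I * I) = colonSet M I :=
  (vCl_colonSet M (I * I)).symm.trans (congrArg (colonSet M) h)

theorem exists_coe_eq_colonSet (hI : I ⊆ M) (hmul : colonSet M (I * I) = colonSet M I) :
    ∃ T : Submonoid G, (T : Set G) = colonSet M I := by
  refine ⟨⟨⟨colonSet M I, fun {y z} hy hz ↦ ?_⟩, one_mem_colonSet.2 hI⟩, rfl⟩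
  rw [← hmul, mem_colonSet_mul]
  intro u hu v hv
  have hmem : y * u * (z * v) ∈ M := M.mul_mem (hy u hu) (hz v hv)
  rwa [mul_mul_mul_comm, ← mul_assoc] at hmem

theorem colonSet_of_coe_eq_colonSet (hT : (T : Set G) = colonSet M I) (X : Set G) :
    colonSet T X = colonSet M (X * I) := by
  ext z
  rw [mem_colonSet_mul, ← hT]
  rfl

theorem IsDivisorial.vCl_eq_of_coe_eq_colonSet (hT : (T : Set G) = colonSet M I)
    (hJ : IsDivisorial T J) : vCl M J = J := by
  have hmul : J = colonSet M (colonSet T J * I) :=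
    hJ.2.symm.trans (colonSet_of_coe_eq_colonSet hT _)
  rw [hmul, vCl_colonSet]

theorem MoriACC.of_coe_eq_colonSet (hacc : MoriACC M) (hT : (T : Set G) = colonSet M I)
    (hI : I.Nonempty) : MoriACC T := by
  obtain ⟨b, hb⟩ := hI
  intro f hf hmono
  exact hacc.fractional_chain_stabilizes (fun n ↦ (hf n).vCl_eq_of_coe_eq_colonSet hT)
    (fun n ↦ subset_colonSet_comm.1 ((hf n).1.trans hT.subset) hb) hmono

theorem mem_nonunitSet_of_coe_eq_colonSet (hT : (T : Set G) = colonSet M I) (hMT : M ≤ T)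
    (hx : x ∈ I ∩ nonunitSet M) : x ∈ nonunitSet T := by
  refine ⟨hMT hx.2.1, fun hxT ↦ hx.2.2 ?_⟩
  have hsq : x⁻¹ * x⁻¹ ∈ colonSet M I := hT ▸ T.mul_mem hxT hxT
  simpa using hsq x hx.1

theorem IsMaximalDivisorial.not_subset_of_coe_eq_colonSet {K : Set G}
    (hK : IsMaximalDivisorial T K) (hT : (T : Set G) = colonSet M I)
    (hmul : colonSet M (I * I) = colonSet M I) : ¬ I ⊆ K := by
  intro hIK
  have hTI : colonSet T I = T := by rw [colonSet_of_coe_eq_colonSet hT, hmul, hT]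
  have hTK : colonSet T K ⊆ T := (colonSet_antitone T hIK).trans hTI.subset
  exact hK.1.2 (hK.1.1.2 ▸ one_mem_colonSet.2 hTK)

theorem IsMinimalUnbounded.boundedDivisors_inter (hI : IsMinimalUnbounded M b I)
    (hJ : vCl M J = J) (hIJ : ¬ I ⊆ J) : BoundedDivisors M b (I ∩ J ∩ nonunitSet M) := by
  by_contra h
  exact hIJ ((hI.2 ⟨hI.1.1.inter hJ, h⟩ Set.inter_subset_left).trans Set.inter_subset_right)

theorem MoriACC.boundedDivisors_nonunitSet (hacc : MoriACC M) (b : G) :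
    BoundedDivisors M b (nonunitSet M) := by
  by_contra hunb
  obtain ⟨I, hI⟩ := hacc.exists_isMinimalUnbounded hunb
  have hIM : I ⊆ M := hI.1.1.1
  have hbI : b ∈ I := hI.1.1.mem_of_not_boundedDivisors hI.1.2
  have hmul : colonSet M (I * I) = colonSet M I :=
    colonSet_mul_self_of_vCl_mul_self hI.vCl_mul_self
  obtain ⟨T, hT⟩ := exists_coe_eq_colonSet hIM hmul
  have hMT : M ≤ T := fun x hx ↦
    hT.symm.subset fun y hy ↦ M.mul_mem hx (hIM hy)
  have haccT : MoriACC T := hacc.of_coe_eq_colonSet hT ⟨b, hbI⟩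
  let F : Set (Set G) := {K | IsMaximalDivisorial T K ∧ b ∈ K}
  have hFfin : F.Finite := haccT.finite_isMaximalDivisorial_mem (hMT (hIM hbI))
  have hbounded : ∀ K ∈ F, BoundedDivisors M b (I ∩ K ∩ nonunitSet M) := fun K hK ↦
    hI.boundedDivisors_inter (hK.1.1.1.vCl_eq_of_coe_eq_colonSet hT)
      (hK.1.not_subset_of_coe_eq_colonSet hT hmul)
  have hunion := BoundedDivisors.biUnion hFfin hbounded
    fun K _ ↦ Set.inter_subset_right.trans (nonunitSet_subset M)
  refine hI.1.2 (hunion.mono_of_dvd (Set.inter_subset_left.trans hIM) fun x hx hbx ↦ ?_)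
  obtain ⟨K, hK, hxK⟩ :=
    haccT.exists_isMaximalDivisorial_mem (mem_nonunitSet_of_coe_eq_colonSet hT hMT hx)
  exact Set.mem_biUnion ⟨hK, hK.1.1.mem_of_div_mem hxK (hMT hbx)⟩ ⟨⟨hx.1, hxK⟩, hx.2⟩

theorem BoundedDivisors.exists_card_le (h : BoundedDivisors M b (nonunitSet M)) :
    ∃ n, ∀ s : Multiset G, (∀ x ∈ s, x ∈ nonunitSet M) → s.prod = b → s.card ≤ n :=
  h.imp fun _ hn s hs hprod ↦ hn s hs (by rw [hprod, div_self']; exact M.one_mem)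

theorem isAtomOf_of_card_maximal {s : Multiset G} (hs : ∀ x ∈ s, x ∈ nonunitSet M)
    (hmax : ∀ t : Multiset G, (∀ x ∈ t, x ∈ nonunitSet M) → t.prod = s.prod → t.card ≤ s.card)
    (hx : x ∈ s) : IsAtomOf M x := by
  refine ⟨(hs x hx).1, (hs x hx).2, fun y z hy hz hxyz ↦ ?_⟩
  by_contra! hyz
  obtain ⟨t, rfl⟩ := Multiset.exists_cons_of_mem hx
  have hcard := hmax (y ::ₘ z ::ₘ t)
    (Multiset.forall_mem_cons.2 ⟨⟨hy, hyz.1⟩, Multiset.forall_mem_cons.2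
      ⟨⟨hz, hyz.2⟩, (Multiset.forall_mem_cons.1 hs).2⟩⟩)
    (by rw [hxyz, Multiset.prod_cons, Multiset.prod_cons, Multiset.prod_cons, mul_assoc])
  simp only [Multiset.card_cons] at hcard
  lia

theorem BoundedDivisors.exists_atom_factorization (h : BoundedDivisors M b (nonunitSet M))
    (hb : b ∈ nonunitSet M) : ∃ s : Multiset G, (∀ x ∈ s, IsAtomOf M x) ∧ s.prod = b := by
  obtain ⟨n, hn⟩ := h.exists_card_le
  let S : Set (Multiset G) := {s | (∀ x ∈ s, x ∈ nonunitSet M) ∧ s.prod = b}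
  have hne : (Multiset.card '' S).Nonempty := ⟨_, {b}, by simpa [S] using hb, rfl⟩
  have hbdd : BddAbove (Multiset.card '' S) :=
    ⟨n, Set.forall_mem_image.2 fun s hs ↦ hn s hs.1 hs.2⟩
  obtain ⟨_, ⟨s, ⟨hs, hprod⟩, rfl⟩, hmax⟩ := hbdd.exists_isGreatest_of_nonempty hne
  exact ⟨s, fun x hx ↦ isAtomOf_of_card_maximal hs
    (fun t ht hts ↦ hmax ⟨t, ⟨ht, hts.trans hprod⟩, rfl⟩) hx, hprod⟩

theorem BoundedDivisors.lengthSetOf_finite (h : BoundedDivisors M b (nonunitSet M)) :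
    (LengthSetOf M b).Finite := by
  obtain ⟨n, hn⟩ := h.exists_card_le
  refine (Set.finite_Iic n).subset ?_
  rintro _ (⟨-, rfl⟩ | ⟨l, rfl, hl, hprod⟩)
  · exact n.zero_le
  · exact hn l (fun x hx ↦ ⟨(hl x hx).1, (hl x hx).2.1⟩) hprod

theorem BoundedDivisors.lengthSetOf_nonempty (h : BoundedDivisors M b (nonunitSet M))
    (hb : b ∈ M) : (LengthSetOf M b).Nonempty := by
  by_cases hunit : b⁻¹ ∈ M
  · exact ⟨0, Or.inl ⟨hunit, rfl⟩⟩
  · obtain ⟨s, hs, hprod⟩ := h.exists_atom_factorization ⟨hb, hunit⟩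
    exact ⟨_, Or.inr ⟨s.toList, rfl, fun x hx ↦ hs x (Multiset.mem_toList.1 hx),
      (Multiset.prod_toList s).trans hprod⟩⟩

end

/-- In a Mori monoid (a cancellative commutative monoid with ACC on divisorial ideals,
realized as a submonoid `M` of its quotient group `G`), every length set is finite and
nonempty. -/
theorem mori_lengthSets_finite_nonempty {G : Type*} [CommGroup G] (M : Submonoid G)
    (hq : ∀ g : G, ∃ a ∈ M, ∃ b ∈ M, g = a * b⁻¹)
    (hacc : MoriACC M) :
    ∀ a ∈ M, (LengthSetOf M a).Finite ∧ (LengthSetOf M a).Nonempty := by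
  intro a ha
  have hbounded : BoundedDivisors M a (nonunitSet M) := hacc.boundedDivisors_nonunitSet a
  exact ⟨hbounded.lengthSetOf_finite, hbounded.lengthSetOf_nonempty ha⟩
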